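/- Let a ∈ ℝ and let u be a bounded classical solution of (E) on ℝ × (0,∞) with u(x,t) → α·H(a−x) as t → 0⁺ locally uniformly on ℝ∖{a}. Then: (1) 0 ≤ u(x,t) ≤ ω(α,t) for all x ∈ ℝ, t > 0; (2) ∂_x u(x,t) < 0 for all x ∈ ℝ and t > 0; (3) for each t > 0, u(x,t) → 0 as x → +∞ and u(x,t) → ω(α,t) as x → −∞; (4) for any x₀ ∈ ℝ, the translate (x,t) ↦ u(x + x₀, t) is such a solution with parameter a − x₀ in place of a; (5) if a₁ < a₂ and u₁, u₂ are such solutions with parameters a₁ and a₂ respectively, then u₁(x,t) < u₂(x,t) for all x ∈ ℝ and t > 0. -/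

import Mathlib

/-!
Everything rests on a comparison principle for the linear heat equation on `ℝ × (t₁, t₂]`: a
solution that is bounded above, is nonpositive initially off a finite set, and has a source
dominated by `L w` where `w > 0`, is nonpositive. At an exceptional point, such as the jump of the
Heaviside datum, a large multiple of a narrow Gaussian bump evolving by the heat flow dominates `w`
initially; at a fixed positive time this barrier vanishes as its width tends to `0`.

The difference `w` of two bounded solutions of (E) solves a heat equation with source at most
`L |w|` in absolute value, because `f` is Lipschitz on bounded sets. Comparing `w` with
`K exp (L t) exp (σ x + σ² t)` yields `0 ≤ u ≤ ω(α,·)` and the order of solutions (`K = 0`), and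
exponential bounds for `u` and `ω(α,·) - u` at `x = ±∞`, hence the limits.

Strictness comes from a quantitative strong maximum principle. If `w ≥ 0`, then
`m exp (-L (t - t₁))` times a Gaussian bump lowered by a constant is a barrier from below, so a gap
`w ≥ m` on an interval at time `t₁` forces `w ≥ κ m` at a given later point, with `κ` independent
of `w` and `m`. For data that differ on an interval this gives `u₁ < u₂`. The gap between `u` and
its translate by `h` is at least proportional to `h` near a point of negative slope, and as `κ` does
not depend on `h`, the difference quotients at later times stay away from `0`, whence `∂ₓu < 0`.
-/

open Real Filter Topology Set

noncomputable section

/-- `u` is a classical solution of `u_t = u_xx + f(t,u)` on `ℝ × I`. -/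
def IsSolOn (f : ℝ → ℝ → ℝ) (u : ℝ → ℝ → ℝ) (I : Set ℝ) : Prop :=
  ∃ ut ux uxx : ℝ → ℝ → ℝ,
    (∀ x : ℝ, ∀ t ∈ I, HasDerivAt (fun s => u x s) (ut x t) t) ∧
    (∀ x : ℝ, ∀ t ∈ I, HasDerivAt (fun y => u y t) (ux x t) x) ∧
    (∀ x : ℝ, ∀ t ∈ I, HasDerivAt (fun y => ux y t) (uxx x t) x) ∧
    ContinuousOn (fun p : ℝ × ℝ => ut p.1 p.2) (Set.univ ×ˢ I) ∧
    ContinuousOn (fun p : ℝ × ℝ => ux p.1 p.2) (Set.univ ×ˢ I) ∧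
    ContinuousOn (fun p : ℝ × ℝ => uxx p.1 p.2) (Set.univ ×ˢ I) ∧
    (∀ x : ℝ, ∀ t ∈ I, ut x t = uxx x t + f t (u x t))

/-- `u₁` is steeper than `u₂` (Definition 2.5). -/
def Steeper (T : ℝ) (u₁ u₂ : ℝ → ℝ → ℝ) : Prop :=
  ∀ (t' x₁ : ℝ) (k : ℤ), u₁ x₁ t' = u₂ x₁ (t' + k * T) →
    (∀ x t : ℝ, u₁ x (t + t') = u₂ x (t + t' + k * T)) ∨
    deriv (fun y => u₁ y t') x₁ < deriv (fun y => u₂ y (t' + k * T)) x₁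

/-- `ψ` is a `T`-periodic solution of the ODE `ω' = f(t,ω)`. -/
def IsPeriodicSol (f : ℝ → ℝ → ℝ) (T : ℝ) (ψ : ℝ → ℝ) : Prop :=
  (∀ t : ℝ, HasDerivAt ψ (f t (ψ t)) t) ∧ ∀ t : ℝ, ψ (t + T) = ψ t

/-- `ψ` is isolated from below w.r.t. the ODE. -/
def IsolatedFromBelow (f : ℝ → ℝ → ℝ) (T : ℝ) (ψ : ℝ → ℝ) : Prop :=
  ¬ ∃ φ : ℕ → ℝ → ℝ, (∀ n, IsPeriodicSol f T (φ n)) ∧ (∀ n t, φ n t < ψ t) ∧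
      TendstoUniformly φ ψ atTop

/-- `ψ` is stable from below w.r.t. the ODE. -/
def StableFromBelow (f : ℝ → ℝ → ℝ) (ψ : ℝ → ℝ) : Prop :=
  ∀ ε > 0, ∃ δ > 0, ∀ g : ℝ → ℝ, (∀ t : ℝ, HasDerivAt g (f t (g t)) t) →
    g 0 ∈ Set.Icc (ψ 0 - δ) (ψ 0) → ∀ t ≥ 0, |g t - ψ t| ≤ ε

/-- Hypothesis (H1). -/
def HypH1 (f : ℝ → ℝ → ℝ) (α : ℝ) (ωα : ℝ → ℝ) : Prop :=
  ∃ u : ℝ → ℝ → ℝ,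
    IsSolOn f u (Set.Ioi 0) ∧
    ContinuousOn (fun p : ℝ × ℝ => u p.1 p.2) (Set.univ ×ˢ Set.Ici 0) ∧
    HasCompactSupport (fun x => u x 0) ∧
    (∀ x : ℝ, 0 ≤ u x 0 ∧ u x 0 < α) ∧
    (∀ K : Set ℝ, IsCompact K → ∀ ε > 0, ∃ t₀ : ℝ, ∀ t ≥ t₀, ∀ x ∈ K, |u x t - ωα t| < ε)

/-- Hypothesis (H2). -/
def HypH2 (f : ℝ → ℝ → ℝ) (T α : ℝ) : Prop :=
  ∀ ψ : ℝ → ℝ, IsPeriodicSol f T ψ → ψ 0 ∈ Set.Ioo 0 α →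
    IsolatedFromBelow f T ψ → ¬ StableFromBelow f ψ →
    ∃ φ : ℕ → ℝ → ℝ,
      (∀ n, ContDiff ℝ 1 (φ n)) ∧
      (∀ n t, φ n (t + T) = φ n t) ∧
      (∀ n t, f t (φ n t) ≤ deriv (φ n) t) ∧
      (∀ n t, φ n t < ψ t) ∧
      TendstoUniformly φ ψ atTop

/-- The solution `ũ(·,·;a)` of (E) with Heaviside-type initial datum `α·H(a−x)`,
bounded between `0` and `ω(α,·)`. -/
def IsHeavisideSol (f : ℝ → ℝ → ℝ) (α a : ℝ) (ωα : ℝ → ℝ) (u : ℝ → ℝ → ℝ) : Prop :=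
  IsSolOn f u (Set.Ioi 0) ∧
  (∀ x : ℝ, ∀ t > 0, 0 ≤ u x t ∧ u x t ≤ ωα t) ∧
  ∀ K : Set ℝ, IsCompact K → a ∉ K → ∀ ε > 0, ∃ δ > 0, ∀ t ∈ Set.Ioo (0:ℝ) δ, ∀ x ∈ K,
    |u x t - α * (if 0 ≤ a - x then 1 else 0)| < ε

/-- `U(x,t) → ψ(t)` as `x → +∞`, locally uniformly in `t`. -/
def LimitAtPlusInf (U : ℝ → ℝ → ℝ) (ψ : ℝ → ℝ) : Prop :=
  ∀ K : Set ℝ, IsCompact K → ∀ ε > 0, ∃ M : ℝ, ∀ x ≥ M, ∀ t ∈ K, |U x t - ψ t| < ε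

/-- `U(x,t) → ψ(t)` as `x → −∞`, locally uniformly in `t`. -/
def LimitAtMinusInf (U : ℝ → ℝ → ℝ) (ψ : ℝ → ℝ) : Prop :=
  ∀ K : Set ℝ, IsCompact K → ∀ ε > 0, ∃ M : ℝ, ∀ x ≤ M, ∀ t ∈ K, |U x t - ψ t| < ε

/-- `U` connects `ωa` (at `x = −∞`) to `ωb` (at `x = +∞`). -/
def Connects (U : ℝ → ℝ → ℝ) (ωa ωb : ℝ → ℝ) : Prop :=
  LimitAtMinusInf U ωa ∧ LimitAtPlusInf U ωb

/-- A pulsating traveling front of (E) with speed `c`, limit `ωa` at `−∞`, `ωb` at `+∞`. -/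
def IsPulsatingFront (f : ℝ → ℝ → ℝ) (T : ℝ) (ωa ωb : ℝ → ℝ) (U : ℝ → ℝ → ℝ) (c : ℝ) :
    Prop :=
  IsSolOn f U Set.univ ∧
  (∃ L : ℝ, c = L / T ∧ ∀ x t : ℝ, U x t = U (x - L) (t + T)) ∧
  Connects U ωa ωb

/-- A propagating terrace of (E) connecting `0` to `ωα`. -/
def IsTerrace (f : ℝ → ℝ → ℝ) (T : ℝ) (ωα : ℝ → ℝ) (N : ℕ)
    (ω : ℕ → ℝ → ℝ) (U : ℕ → ℝ → ℝ → ℝ) (c : ℕ → ℝ) : Prop :=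
  1 ≤ N ∧
  (∀ k ≤ N, IsPeriodicSol f T (ω k)) ∧
  (∀ t, ω 0 t = ωα t) ∧ (∀ t, ω N t = 0) ∧
  (∀ k, k < N → ∀ t, ω (k + 1) t < ω k t) ∧
  (∀ k, 1 ≤ k → k ≤ N → IsPulsatingFront f T (ω (k - 1)) (ω k) (U k) (c k)) ∧
  0 ≤ c 1 ∧ (∀ k, 1 ≤ k → k < N → c k ≤ c (k + 1))

/-- A minimal propagating terrace (Definition 1.4). -/
def IsMinimalTerrace (f : ℝ → ℝ → ℝ) (T : ℝ) (ωα : ℝ → ℝ) (N : ℕ)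
    (ω : ℕ → ℝ → ℝ) (U : ℕ → ℝ → ℝ → ℝ) (c : ℕ → ℝ) : Prop :=
  IsTerrace f T ωα N ω U c ∧
  (∀ (N' : ℕ) (ψ : ℕ → ℝ → ℝ) (V : ℕ → ℝ → ℝ → ℝ) (c' : ℕ → ℝ),
      IsTerrace f T ωα N' ψ V c' → ∀ k ≤ N, ∃ j ≤ N', ∀ t, ω k t = ψ j t) ∧
  (∀ k, 1 ≤ k → k ≤ N → ∀ V : ℝ → ℝ → ℝ, IsSolOn f V Set.univ →
      Connects V (ω (k - 1)) (ω k) → Steeper T (U k) V)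

/-- A bounded classical solution of (E) on `ℝ × (0,∞)` with Heaviside-type initial datum
`α·H(a−x)` (attained locally uniformly on `ℝ∖{a}` as `t → 0⁺`). -/
def IsHeavisideSolBdd (f : ℝ → ℝ → ℝ) (α a : ℝ) (u : ℝ → ℝ → ℝ) : Prop :=
  IsSolOn f u (Set.Ioi 0) ∧
  (∃ C : ℝ, ∀ x : ℝ, ∀ t > 0, |u x t| ≤ C) ∧
  ∀ K : Set ℝ, IsCompact K → a ∉ K → ∀ ε > 0, ∃ δ > 0, ∀ t ∈ Set.Ioo (0:ℝ) δ, ∀ x ∈ K,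
    |u x t - α * (if 0 ≤ a - x then 1 else 0)| < ε

/-! ### Derivative tests at a maximum -/

lemma deriv_nonneg_of_isLocalMaxOn_Iic {h : ℝ → ℝ} {h' t : ℝ} (hd : HasDerivAt h h' t)
    (hmax : IsLocalMaxOn h (Iic t) t) : 0 ≤ h' := by
  have hslope : Tendsto (slope h t) (𝓝[<] t) (𝓝 h') :=
    hasDerivWithinAt_iff_tendsto_slope' (by simp) |>.1 hd.hasDerivWithinAt
  refine ge_of_tendsto hslope ?_
  filter_upwards [self_mem_nhdsWithin, hmax.filter_mono (nhdsWithin_mono t Iio_subset_Iic_self)]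
    with s hst hs
  rw [slope_def_field]
  exact div_nonneg_of_nonpos (sub_nonpos.2 hs) (sub_nonpos.2 (mem_Iio.1 hst).le)

lemma second_deriv_nonpos_of_isLocalMax {h h' : ℝ → ℝ} {h'' x : ℝ}
    (hd : ∀ᶠ y in 𝓝 x, HasDerivAt h (h' y) y) (hd' : HasDerivAt h' h'' x)
    (hmax : IsLocalMax h x) : h'' ≤ 0 := by
  by_contra! hpos
  have hderiv : deriv h =ᶠ[𝓝 x] h' := hd.mono fun y hy => hy.deriv
  have hmin : IsLocalMin h x :=
    isLocalMin_of_deriv_deriv_pos (by rwa [hderiv.deriv_eq, hd'.deriv]) hmax.deriv_eq_zero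
      hd.self_of_nhds.continuousAt
  have hconst : h =ᶠ[𝓝 x] fun _ => h x := by
    filter_upwards [hmax, hmin] with y hle hge using le_antisymm hle hge
  have hzero : deriv (deriv h) x = 0 := by
    rw [hconst.deriv.deriv_eq]
    simp
  rw [hderiv.deriv_eq, hd'.deriv] at hzero
  exact hpos.ne' hzero

/-! ### The inhomogeneous heat equation -/

/-- `w` is a classical solution of the heat equation `w_t = w_xx + F(x,t)` on `ℝ × I`. In contrast
to `IsSolOn` the source `F` is a given function of `(x,t)`, which makes the equation linear; only
`w` itself, not its derivatives, is required to be continuous. -/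
def IsHeatSolOn (F w : ℝ → ℝ → ℝ) (I : Set ℝ) : Prop :=
  ContinuousOn (fun z : ℝ × ℝ => w z.1 z.2) (univ ×ˢ I) ∧
  ∃ wx wxx : ℝ → ℝ → ℝ, ∀ x : ℝ, ∀ t ∈ I,
    HasDerivAt (fun y => w y t) (wx x t) x ∧
    HasDerivAt (fun y => wx y t) (wxx x t) x ∧
    HasDerivAt (fun s => w x s) (wxx x t + F x t) t

namespace IsHeatSolOn

variable {F G v w : ℝ → ℝ → ℝ} {I J : Set ℝ}

lemma mono (hw : IsHeatSolOn F w I) (hJI : J ⊆ I) : IsHeatSolOn F w J := by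
  obtain ⟨hcont, wx, wxx, hderiv⟩ := hw
  exact ⟨hcont.mono (prod_mono_right hJI), wx, wxx, fun x t ht => hderiv x t (hJI ht)⟩

lemma sub (hw : IsHeatSolOn F w I) (hv : IsHeatSolOn G v I) :
    IsHeatSolOn (fun x t => F x t - G x t) (fun x t => w x t - v x t) I := by
  obtain ⟨hwcont, wx, wxx, hw⟩ := hw
  obtain ⟨hvcont, vx, vxx, hv⟩ := hv
  refine ⟨hwcont.sub hvcont, fun x t => wx x t - vx x t, fun x t => wxx x t - vxx x t,
    fun x t ht => ?_⟩
  obtain ⟨hwx, hwxx, hwt⟩ := hw x t ht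
  obtain ⟨hvx, hvxx, hvt⟩ := hv x t ht
  exact ⟨hwx.sub hvx, hwxx.sub hvxx, (hwt.sub hvt).congr_deriv (by ring)⟩

lemma const_mul (hw : IsHeatSolOn F w I) (c : ℝ) :
    IsHeatSolOn (fun x t => c * F x t) (fun x t => c * w x t) I := by
  obtain ⟨hcont, wx, wxx, hw⟩ := hw
  refine ⟨continuousOn_const.mul hcont, fun x t => c * wx x t, fun x t => c * wxx x t,
    fun x t ht => ?_⟩
  obtain ⟨hwx, hwxx, hwt⟩ := hw x t ht
  exact ⟨hwx.const_mul c, hwxx.const_mul c, (hwt.const_mul c).congr_deriv (by ring)⟩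

lemma exp_mul (hw : IsHeatSolOn F w I) (c t₀ : ℝ) :
    IsHeatSolOn (fun x t => exp (c * (t - t₀)) * (F x t + c * w x t))
      (fun x t => exp (c * (t - t₀)) * w x t) I := by
  obtain ⟨hcont, wx, wxx, hw⟩ := hw
  refine ⟨ContinuousOn.mul (by fun_prop) hcont, fun x t => exp (c * (t - t₀)) * wx x t,
    fun x t => exp (c * (t - t₀)) * wxx x t, fun x t ht => ?_⟩
  obtain ⟨hwx, hwxx, hwt⟩ := hw x t ht
  have hexp : HasDerivAt (fun s => exp (c * (s - t₀))) (exp (c * (t - t₀)) * (c * 1)) t :=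
    (((hasDerivAt_id t).sub_const t₀).const_mul c).exp
  exact ⟨hwx.const_mul _, hwxx.const_mul _, (hexp.mul hwt).congr_deriv (by ring)⟩

lemma comp_add_const (hw : IsHeatSolOn F w I) (h : ℝ) :
    IsHeatSolOn (fun x t => F (x + h) t) (fun x t => w (x + h) t) I := by
  obtain ⟨hcont, wx, wxx, hw⟩ := hw
  refine ⟨hcont.comp (f := fun z : ℝ × ℝ => (z.1 + h, z.2)) (by fun_prop) fun z hz =>
    ⟨trivial, hz.2⟩, fun x t => wx (x + h) t, fun x t => wxx (x + h) t, fun x t ht => ?_⟩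
  obtain ⟨hwx, hwxx, hwt⟩ := hw (x + h) t ht
  exact ⟨hwx.comp_add_const x h, hwxx.comp_add_const x h, hwt⟩

end IsHeatSolOn

lemma isHeatSolOn_const (c : ℝ) (I : Set ℝ) : IsHeatSolOn (fun _ _ => 0) (fun _ _ => c) I :=
  ⟨continuousOn_const, fun _ _ => 0, fun _ _ => 0, fun x t _ =>
    ⟨hasDerivAt_const x c, hasDerivAt_const x 0, by simpa using hasDerivAt_const t c⟩⟩

lemma isHeatSolOn_sq_add_time (t₀ : ℝ) (I : Set ℝ) :
    IsHeatSolOn (fun _ _ => 1) (fun x t => 1 + x ^ 2 + 3 * (t - t₀)) I := by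
  refine ⟨by fun_prop, fun x _ => 2 * x, fun _ _ => 2, fun x t _ => ⟨?_, ?_, ?_⟩⟩
  · simpa using ((hasDerivAt_pow 2 x).const_add 1).add_const (3 * (t - t₀))
  · simpa using (hasDerivAt_id x).const_mul 2
  · exact ((((hasDerivAt_id t).sub_const t₀).const_mul 3).const_add _).congr_deriv (by norm_num)

lemma isHeatSolOn_exp (σ : ℝ) (I : Set ℝ) :
    IsHeatSolOn (fun _ _ => 0) (fun x t => exp (σ * x + σ ^ 2 * t)) I := by
  have hspace (x t : ℝ) :
      HasDerivAt (fun y => exp (σ * y + σ ^ 2 * t)) (σ * exp (σ * x + σ ^ 2 * t)) x :=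
    (((hasDerivAt_id x).const_mul σ).add_const _).exp.congr_deriv (by simp [mul_comm])
  refine ⟨by fun_prop, fun x t => σ * exp (σ * x + σ ^ 2 * t),
    fun x t => σ * (σ * exp (σ * x + σ ^ 2 * t)),
    fun x t _ => ⟨hspace x t, (hspace x t).const_mul σ, ?_⟩⟩
  exact (((hasDerivAt_id t).const_mul (σ ^ 2)).const_add _).exp.congr_deriv
    (by simp only [id, mul_one]; ring)

/-! ### Gaussian barriers -/

/-- The fundamental solution of the heat equation without its factor `1 / √(4π)`. -/
def heatKernel (x t : ℝ) : ℝ := exp (-x ^ 2 / (4 * t)) / √t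

lemma hasDerivAt_heatKernel_space (x t : ℝ) :
    HasDerivAt (fun y => heatKernel y t) (heatKernel x t * (-x / (2 * t))) x := by
  have hexponent : HasDerivAt (fun y : ℝ => -y ^ 2 / (4 * t)) (-(2 * x) / (4 * t)) x := by
    simpa using (hasDerivAt_pow 2 x).neg.div_const (4 * t)
  refine (hexponent.exp.div_const (√t)).congr_deriv ?_
  rw [heatKernel]
  ring

lemma hasDerivAt_heatKernel_space_space (x t : ℝ) :
    HasDerivAt (fun y => heatKernel y t * (-y / (2 * t)))
      (heatKernel x t * (x ^ 2 / (4 * t ^ 2) - 1 / (2 * t))) x := by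
  have hfactor : HasDerivAt (fun y : ℝ => -y / (2 * t)) (-1 / (2 * t)) x :=
    (hasDerivAt_id x).neg.div_const _
  refine ((hasDerivAt_heatKernel_space x t).mul hfactor).congr_deriv ?_
  ring

lemma hasDerivAt_heatKernel_time (x : ℝ) {t : ℝ} (ht : 0 < t) :
    HasDerivAt (fun s => heatKernel x s)
      (heatKernel x t * (x ^ 2 / (4 * t ^ 2) - 1 / (2 * t))) t := by
  have hsqrt : 0 < √t := Real.sqrt_pos.2 ht
  have hexponent : HasDerivAt (fun s : ℝ => -x ^ 2 / (4 * s)) (x ^ 2 / (4 * t ^ 2)) t := by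
    refine ((hasDerivAt_const t (-x ^ 2)).div ((hasDerivAt_id t).const_mul 4)
      (by simpa using ht.ne')).congr_deriv ?_
    simp only [id]
    field_simp
    ring
  refine (hexponent.exp.div (Real.hasDerivAt_sqrt ht.ne') hsqrt.ne').congr_deriv ?_
  have hsq : √t ^ 2 = t := Real.sq_sqrt ht.le
  rw [heatKernel]
  field_simp
  rw [hsq]
  ring

lemma heatKernel_pos (x : ℝ) {t : ℝ} (ht : 0 < t) : 0 < heatKernel x t :=
  div_pos (Real.exp_pos _) (Real.sqrt_pos.2 ht)

lemma tendsto_heatKernel_time_zero {x : ℝ} (hx : 0 < x) :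
    Tendsto (fun t => heatKernel x t) (𝓝[>] 0) (𝓝 0) := by
  have hinv := (tendsto_rpow_mul_exp_neg_mul_atTop_nhds_zero (1 / 2) (x ^ 2 / 4)
    (by positivity)).comp tendsto_inv_nhdsGT_zero
  refine hinv.congr fun t => ?_
  rw [Function.comp_apply, ← Real.sqrt_eq_rpow, Real.sqrt_inv, heatKernel, div_eq_mul_inv _ √t,
    mul_comm]
  congr 2
  ring

/-- The heat flow started at time `t₀` from the Gaussian bump of height `1` and width of order `√s`
centred at `p`. -/
def gaussianBump (s p t₀ x t : ℝ) : ℝ := √s * heatKernel (x - p) (t - t₀ + s)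

section GaussianBump

variable {s t₀ t : ℝ} (p x : ℝ)

lemma continuousOn_gaussianBump :
    ContinuousOn (fun z : ℝ × ℝ => gaussianBump s p t₀ z.1 z.2) (univ ×ˢ Ioi (t₀ - s)) := by
  have hpos : ∀ z ∈ (univ ×ˢ Ioi (t₀ - s) : Set (ℝ × ℝ)), 0 < z.2 - t₀ + s := fun z hz => by
    have := mem_Ioi.1 hz.2
    linarith
  refine continuousOn_const.mul (ContinuousOn.div ?_ (by fun_prop) fun z hz =>
    (Real.sqrt_pos.2 (hpos z hz)).ne')
  exact Real.continuous_exp.comp_continuousOn (ContinuousOn.div (by fun_prop) (by fun_prop)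
    fun z hz => mul_ne_zero four_ne_zero (hpos z hz).ne')

lemma isHeatSolOn_gaussianBump :
    IsHeatSolOn (fun _ _ => 0) (gaussianBump s p t₀) (Ioi (t₀ - s)) := by
  refine ⟨continuousOn_gaussianBump p,
    fun x t => √s * (heatKernel (x - p) (t - t₀ + s) * (-(x - p) / (2 * (t - t₀ + s)))),
    fun x t => √s * (heatKernel (x - p) (t - t₀ + s) *
      ((x - p) ^ 2 / (4 * (t - t₀ + s) ^ 2) - 1 / (2 * (t - t₀ + s)))), fun x t ht => ⟨?_, ?_, ?_⟩⟩
  · exact ((hasDerivAt_heatKernel_space _ _).comp_sub_const x p).const_mul _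
  · exact ((hasDerivAt_heatKernel_space_space _ _).comp_sub_const x p).const_mul _
  · have htime : 0 < t - t₀ + s := by linarith [mem_Ioi.1 ht]
    have hshift : HasDerivAt (fun r => r - t₀ + s) 1 t :=
      ((hasDerivAt_id t).sub_const t₀).add_const s
    have hkernel := (hasDerivAt_heatKernel_time (x - p) htime).comp t hshift
    exact (hkernel.const_mul (√s)).congr_deriv (by ring)

lemma gaussianBump_pos (hs : 0 < s) (ht : t₀ ≤ t) : 0 < gaussianBump s p t₀ x t := by
  have : 0 < √(t - t₀ + s) := Real.sqrt_pos.2 (by linarith)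
  rw [gaussianBump, heatKernel]
  positivity

lemma gaussianBump_le_one (hs : 0 < s) (ht : t₀ ≤ t) : gaussianBump s p t₀ x t ≤ 1 := by
  have htime : 0 < t - t₀ + s := by linarith
  have hsqrt : √s ≤ √(t - t₀ + s) := Real.sqrt_le_sqrt (by linarith)
  have hexp : exp (-(x - p) ^ 2 / (4 * (t - t₀ + s))) ≤ 1 :=
    Real.exp_le_one_iff.2 (div_nonpos_of_nonpos_of_nonneg (by nlinarith) (by positivity))
  rw [gaussianBump, heatKernel, ← mul_div_assoc, div_le_one (Real.sqrt_pos.2 htime)]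
  exact (mul_le_of_le_one_right (Real.sqrt_nonneg s) hexp).trans hsqrt

lemma gaussianBump_initial (hs : 0 < s) :
    gaussianBump s p t₀ x t₀ = exp (-(x - p) ^ 2 / (4 * s)) := by
  have := Real.sqrt_pos.2 hs
  rw [gaussianBump, heatKernel, sub_self, zero_add]
  field_simp

lemma gaussianBump_initial_le_exp (hs : 0 < s) {r : ℝ} (hr : 0 ≤ r) (hx : r ≤ |x - p|) :
    gaussianBump s p t₀ x t₀ ≤ exp (-r ^ 2 / (4 * s)) := by
  have hsq : r ^ 2 ≤ (x - p) ^ 2 := sq_le_sq.2 (by rwa [abs_of_nonneg hr])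
  rw [gaussianBump_initial p x hs]
  gcongr

lemma tendsto_gaussianBump_initial (hs : 0 < s) :
    Tendsto (fun z : ℝ × ℝ => gaussianBump s p t₀ z.1 z.2) (𝓝 x ×ˢ 𝓝[>] t₀)
      (𝓝 (exp (-(x - p) ^ 2 / (4 * s)))) := by
  have hcont : ContinuousAt (fun z : ℝ × ℝ => gaussianBump s p t₀ z.1 z.2) (x, t₀) :=
    (continuousOn_gaussianBump p).continuousAt
      ((isOpen_univ.prod isOpen_Ioi).mem_nhds ⟨trivial, by simpa using hs⟩)
  rw [ContinuousAt, nhds_prod_eq, gaussianBump_initial p x hs] at hcont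
  exact hcont.mono_left (prod_mono_right _ nhdsWithin_le_nhds)

lemma tendsto_gaussianBump_width_zero (ht : t₀ < t) :
    Tendsto (fun s => gaussianBump s p t₀ x t) (𝓝[>] 0) (𝓝 0) := by
  have hcont : ContinuousAt (fun s => gaussianBump s p t₀ x t) 0 := by
    have hkernel : ContinuousAt (fun r => heatKernel (x - p) r) (t - t₀ + 0) :=
      (hasDerivAt_heatKernel_time _ (by linarith)).continuousAt
    exact Real.continuous_sqrt.continuousAt.mul
      (ContinuousAt.comp (f := fun s => t - t₀ + s) hkernel (by fun_prop))
  simpa [ContinuousAt, gaussianBump] using hcont.mono_left nhdsWithin_le_nhds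

lemma exists_exp_lt_gaussianBump {r : ℝ} (hr : 0 < r) (ht : t₀ < t) :
    ∃ s > 0, exp (-r ^ 2 / (4 * s)) < gaussianBump s p t₀ x t := by
  have htime : 0 < t - t₀ + 0 := by linarith
  have hkernel : Tendsto (fun s => heatKernel (x - p) (t - t₀ + s)) (𝓝[>] 0)
      (𝓝 (heatKernel (x - p) (t - t₀ + 0))) :=
    ((hasDerivAt_heatKernel_time (x - p) htime).continuousAt.tendsto.comp
      (by fun_prop : Continuous fun s => t - t₀ + s).continuousAt.tendsto).mono_left
      nhdsWithin_le_nhds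
  obtain ⟨s, hlt, hs⟩ := (((tendsto_heatKernel_time_zero hr).eventually_lt hkernel
    (heatKernel_pos _ htime)).and self_mem_nhdsWithin).exists
  refine ⟨s, hs, ?_⟩
  rwa [heatKernel, div_lt_iff₀' (Real.sqrt_pos.2 hs)] at hlt

end GaussianBump

/-! ### The maximum principle -/

lemma IsHeatSolOn.source_nonneg_of_isMaxOn {F w : ℝ → ℝ → ℝ} {I : Set ℝ} {a b σ τ x t : ℝ}
    (hw : IsHeatSolOn F w I) (htI : t ∈ I) (hx : x ∈ Ioo a b) (ht : t ∈ Ioc σ τ)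
    (hmax : IsMaxOn (fun z : ℝ × ℝ => w z.1 z.2) (Icc a b ×ˢ Icc σ τ) (x, t)) : 0 ≤ F x t := by
  obtain ⟨-, wx, wxx, hderiv⟩ := hw
  have hspace : wxx x t ≤ 0 := by
    refine second_deriv_nonpos_of_isLocalMax (.of_forall fun y => (hderiv y t htI).1)
      (hderiv x t htI).2.1 ?_
    filter_upwards [Icc_mem_nhds hx.1 hx.2] with y hy
    exact hmax (show (y, t) ∈ _ from ⟨hy, Ioc_subset_Icc_self ht⟩)
  have htime : 0 ≤ wxx x t + F x t := by
    refine deriv_nonneg_of_isLocalMaxOn_Iic (hderiv x t htI).2.2 ?_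
    filter_upwards [self_mem_nhdsWithin, nhdsWithin_le_nhds (Ioi_mem_nhds ht.1)] with s hst hσs
    exact hmax (show (x, s) ∈ _ from ⟨Ioo_subset_Icc_self hx, le_of_lt hσs, le_trans hst ht.2⟩)
  linarith

/-- `limsup w(y,t) ≤ 0` as `y → x` and `t → t₀⁺`: the form in which a nonpositive initial value is
attained at `(x, t₀)`. -/
def IsInitiallyNonposAt (w : ℝ → ℝ → ℝ) (t₀ x : ℝ) : Prop :=
  ∀ ε > 0, ∀ᶠ z in 𝓝 x ×ˢ 𝓝[>] t₀, w z.1 z.2 < ε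

lemma IsInitiallyNonposAt.of_tendsto {w : ℝ → ℝ → ℝ} {t₀ x l : ℝ}
    (hw : Tendsto (fun z : ℝ × ℝ => w z.1 z.2) (𝓝 x ×ˢ 𝓝[>] t₀) (𝓝 l)) (hl : l ≤ 0) :
    IsInitiallyNonposAt w t₀ x :=
  fun _ hε => hw.eventually_lt_const (hl.trans_lt hε)

lemma IsInitiallyNonposAt.mono {v w : ℝ → ℝ → ℝ} {t₀ x : ℝ} (hw : IsInitiallyNonposAt w t₀ x)
    (hvw : ∀ᶠ z in 𝓝 x ×ˢ 𝓝[>] t₀, v z.1 z.2 ≤ max (w z.1 z.2) 0) :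
    IsInitiallyNonposAt v t₀ x := by
  intro ε hε
  filter_upwards [hw ε hε, hvw] with z hwz hvz
  exact hvz.trans_lt (max_lt hwz hε)

lemma eventually_forall_lt_of_isInitiallyNonposAt {w : ℝ → ℝ → ℝ} {t₀ ε : ℝ} {K : Set ℝ}
    (hK : IsCompact K) (hw : ∀ x ∈ K, IsInitiallyNonposAt w t₀ x) (hε : 0 < ε) :
    ∀ᶠ t in 𝓝[>] t₀, ∀ x ∈ K, w x t < ε := by
  obtain ⟨U, hU, V, hV, hUV⟩ :=
    mem_prod_iff.1 (hK.mem_nhdsSet_prod_of_forall fun x hx => hw x hx ε hε)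
  filter_upwards [hV] with t ht x hx
  exact hUV (mk_mem_prod (subset_of_mem_nhdsSet hU hx) ht)

lemma eventually_initial {x t₁ t₂ : ℝ} (ht : t₁ < t₂) :
    ∀ᶠ z in 𝓝 x ×ˢ 𝓝[>] t₁, z.2 ∈ Ioc t₁ t₂ :=
  tendsto_snd.eventually (Ioc_mem_nhdsGT ht)

lemma isInitiallyNonposAt_sub_gaussianBump {w : ℝ → ℝ → ℝ} {t₁ t₂ M : ℝ}
    (hM : ∀ x, ∀ t ∈ Ioc t₁ t₂, w x t ≤ M) (ht : t₁ < t₂) {s : ℝ} (hs : 0 < s) (p : ℝ) :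
    IsInitiallyNonposAt (fun x t => w x t - (|M| + 1) * gaussianBump s p t₁ x t) t₁ p := by
  have hbump : Tendsto (fun z : ℝ × ℝ => M - (|M| + 1) * gaussianBump s p t₁ z.1 z.2)
      (𝓝 p ×ˢ 𝓝[>] t₁) (𝓝 (M - (|M| + 1))) := by
    simpa using ((tendsto_gaussianBump_initial p p hs).const_mul (|M| + 1)).const_sub M
  refine (IsInitiallyNonposAt.of_tendsto
    (w := fun x t => M - (|M| + 1) * gaussianBump s p t₁ x t) hbump
    (by linarith [le_abs_self M])).mono ?_
  filter_upwards [eventually_initial ht] with z hz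
  exact le_max_of_le_left (sub_le_sub_right (hM _ _ hz) _)

namespace IsHeatSolOn

variable {F w : ℝ → ℝ → ℝ} {t₁ t₂ M : ℝ}

lemma le_mul_sq_add_time (hw : IsHeatSolOn F w (Ioc t₁ t₂)) (hM : ∀ x, ∀ t ∈ Ioc t₁ t₂, w x t ≤ M)
    (hF : ∀ x, ∀ t ∈ Ioc t₁ t₂, 0 < w x t → F x t ≤ 0) (hinit : ∀ x, IsInitiallyNonposAt w t₁ x)
    {η : ℝ} (hη : 0 < η) (x : ℝ) {t : ℝ} (ht : t ∈ Ioc t₁ t₂) :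
    w x t ≤ η * (1 + x ^ 2 + 3 * (t - t₁)) := by
  by_contra! hlt
  set v : ℝ → ℝ → ℝ := fun y s => w y s - η * (1 + y ^ 2 + 3 * (s - t₁))
  have hv : IsHeatSolOn (fun y s => F y s - η * 1) v (Ioc t₁ t₂) :=
    hw.sub ((isHeatSolOn_sq_add_time t₁ _).const_mul η)
  have hvpos : 0 < v x t := sub_pos.2 hlt
  obtain ⟨R, hRx, hRM⟩ : ∃ R, |x| < R ∧ M ≤ η * R ^ 2 := by
    have hlim : Tendsto (fun R : ℝ => η * R ^ 2) atTop atTop :=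
      (tendsto_pow_atTop two_ne_zero).const_mul_atTop hη
    exact ((eventually_gt_atTop |x|).and (hlim.eventually_ge_atTop M)).exists
  obtain ⟨σ, hσ, hσt⟩ := ((eventually_forall_lt_of_isInitiallyNonposAt isCompact_Icc
    (fun y (_ : y ∈ Icc (-R) R) => hinit y) hη).and (Ioo_mem_nhdsGT ht.1)).exists
  have hrect : Icc σ t ⊆ Ioc t₁ t₂ := fun s hs => ⟨hσt.1.trans_le hs.1, hs.2.trans ht.2⟩
  have hxt : (x, t) ∈ Icc (-R) R ×ˢ Icc σ t := ⟨abs_le.1 hRx.le, hσt.2.le, le_rfl⟩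
  obtain ⟨⟨y, s⟩, ⟨hy, hs⟩, hmax⟩ := (isCompact_Icc.prod isCompact_Icc).exists_isMaxOn ⟨_, hxt⟩
    (hv.1.mono (prod_mono (subset_univ _) hrect))
  have hypos : 0 < w y s - η * (1 + y ^ 2 + 3 * (s - t₁)) := hvpos.trans_le (hmax hxt)
  have hst : 0 < s - t₁ := sub_pos.2 (hrect hs).1
  have hyR : |y| < R := by
    by_contra! hRy
    have hsq : R ^ 2 ≤ y ^ 2 := sq_le_sq.2 (by rwa [abs_of_pos ((abs_nonneg x).trans_lt hRx)])
    nlinarith [hM y s (hrect hs)]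
  have hσs : σ < s := by
    refine hs.1.lt_of_ne fun hσs => ?_
    have := hσ y hy
    rw [hσs] at this
    nlinarith [sq_nonneg y]
  have hwpos : 0 < w y s := hypos.trans_le (sub_le_self _ (by positivity))
  have hsource := hv.source_nonneg_of_isMaxOn (hrect hs) (abs_lt.1 hyR) ⟨hσs, hs.2⟩ hmax
  linarith [hF y s (hrect hs) hwpos]

lemma nonpos_of_forall_isInitiallyNonposAt (hw : IsHeatSolOn F w (Ioc t₁ t₂))
    (hM : ∀ x, ∀ t ∈ Ioc t₁ t₂, w x t ≤ M)
    (hF : ∀ x, ∀ t ∈ Ioc t₁ t₂, 0 < w x t → F x t ≤ 0) (hinit : ∀ x, IsInitiallyNonposAt w t₁ x)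
    (x : ℝ) {t : ℝ} (ht : t ∈ Ioc t₁ t₂) : w x t ≤ 0 := by
  have hlim : Tendsto (fun η => η * (1 + x ^ 2 + 3 * (t - t₁))) (𝓝[>] 0) (𝓝 0) :=
    tendsto_nhdsWithin_of_tendsto_nhds (Continuous.tendsto' (by fun_prop) 0 0 (by simp))
  refine ge_of_tendsto hlim ?_
  filter_upwards [self_mem_nhdsWithin] with η hη using hw.le_mul_sq_add_time hM hF hinit hη x ht

/-- At an exceptional point, where the initial value is not controlled, a multiple of a Gaussian
bump dominates `w`; letting the width of the bump tend to `0` removes it at positive times. -/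
lemma nonpos_of_source_nonpos {S : Set ℝ} (hS : S.Finite) (hw : IsHeatSolOn F w (Ioc t₁ t₂))
    (hM : ∀ x, ∀ t ∈ Ioc t₁ t₂, w x t ≤ M) (hF : ∀ x, ∀ t ∈ Ioc t₁ t₂, 0 < w x t → F x t ≤ 0)
    (hinit : ∀ x ∉ S, IsInitiallyNonposAt w t₁ x) (x : ℝ) {t : ℝ} (ht : t ∈ Ioc t₁ t₂) :
    w x t ≤ 0 := by
  induction S, hS using Set.Finite.induction_on generalizing F w with
  | empty => exact hw.nonpos_of_forall_isInitiallyNonposAt hM hF (fun x => hinit x (by simp)) x ht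
  | @insert p S _ _ ih =>
    have hlim : Tendsto (fun s => (|M| + 1) * gaussianBump s p t₁ x t) (𝓝[>] 0) (𝓝 0) := by
      simpa using (tendsto_gaussianBump_width_zero p x ht.1).const_mul (|M| + 1)
    refine ge_of_tendsto hlim ?_
    filter_upwards [self_mem_nhdsWithin] with s hs
    have hbump (y r : ℝ) (hr : r ∈ Ioc t₁ t₂) : 0 < (|M| + 1) * gaussianBump s p t₁ y r :=
      mul_pos (by positivity) (gaussianBump_pos p y hs hr.1.le)
    have hsub : Ioc t₁ t₂ ⊆ Ioi (t₁ - s) := fun r hr => (sub_lt_self t₁ hs).trans hr.1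
    have hv := hw.sub (((isHeatSolOn_gaussianBump p).mono hsub).const_mul (|M| + 1))
    refine sub_nonpos.1 (ih hv (fun y r hr => ?_) (fun y r hr hpos => ?_) fun y hy => ?_)
    · linarith [hM y r hr, hbump y r hr]
    · simpa using hF y r hr (by linarith [hbump y r hr])
    · rcases eq_or_ne y p with rfl | hyp
      · exact isInitiallyNonposAt_sub_gaussianBump hM (ht.1.trans_le ht.2) hs y
      · refine (hinit y (by simp [hyp, hy])).mono ?_
        filter_upwards [eventually_initial (ht.1.trans_le ht.2)] with z hz
        exact le_max_of_le_left (by linarith [hbump z.1 z.2 hz])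

theorem nonpos {S : Set ℝ} (hS : S.Finite) (hw : IsHeatSolOn F w (Ioc t₁ t₂))
    (hM : ∀ x, ∀ t ∈ Ioc t₁ t₂, w x t ≤ M) {L : NNReal}
    (hF : ∀ x, ∀ t ∈ Ioc t₁ t₂, 0 < w x t → F x t ≤ L * w x t)
    (hinit : ∀ x ∉ S, IsInitiallyNonposAt w t₁ x) (x : ℝ) {t : ℝ} (ht : t ∈ Ioc t₁ t₂) :
    w x t ≤ 0 := by
  have hexp_pos (s : ℝ) : 0 < exp (-L * (s - t₁)) := Real.exp_pos _
  have hexp_le {s : ℝ} (hs : s ∈ Ioc t₁ t₂) (y : ℝ) : exp (-L * (s - t₁)) * y ≤ max y 0 := by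
    have hle : exp (-L * (s - t₁)) ≤ 1 :=
      Real.exp_le_one_iff.2 (mul_nonpos_of_nonpos_of_nonneg (by simp) (sub_nonneg.2 hs.1.le))
    calc exp (-L * (s - t₁)) * y ≤ exp (-L * (s - t₁)) * max y 0 := by gcongr; exact le_max_left y 0
      _ ≤ max y 0 := mul_le_of_le_one_left (le_max_right y 0) hle
  refine nonpos_of_mul_nonpos_right ((hw.exp_mul (-L) t₁).nonpos_of_source_nonpos (M := max M 0) hS
    (fun y s hs => ?_) (fun y s hs hpos => ?_) (fun y hy => ?_) x ht) (hexp_pos t)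
  · exact (hexp_le hs _).trans (max_le_max_right 0 (hM y s hs))
  · have := hF y s hs ((mul_pos_iff_of_pos_left (hexp_pos s)).1 hpos)
    exact mul_nonpos_of_nonneg_of_nonpos (hexp_pos s).le (by linarith)
  · refine (hinit y hy).mono ?_
    filter_upwards [eventually_initial (ht.1.trans_le ht.2)] with z hz using hexp_le hz _

end IsHeatSolOn

/-! ### Linearly forced functions -/

/-- `w` solves a heat equation whose source is dominated by `L * |w|`. Differences of solutions of a
semilinear equation have this property, which is all that the comparison arguments need. -/
def IsLinearlyForcedOn (L : NNReal) (w : ℝ → ℝ → ℝ) (I : Set ℝ) : Prop :=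
  ∃ F : ℝ → ℝ → ℝ, IsHeatSolOn F w I ∧ ∀ x, ∀ t ∈ I, |F x t| ≤ L * |w x t|

namespace IsLinearlyForcedOn

variable {L : NNReal} {B w : ℝ → ℝ → ℝ} {I J : Set ℝ} {t₁ t₂ M : ℝ}

lemma mono (hw : IsLinearlyForcedOn L w I) (hJI : J ⊆ I) : IsLinearlyForcedOn L w J := by
  obtain ⟨F, hF, hle⟩ := hw
  exact ⟨F, hF.mono hJI, fun x t ht => hle x t (hJI ht)⟩

lemma le_barrier {S : Set ℝ} (hS : S.Finite) (hw : IsLinearlyForcedOn L w (Ioc t₁ t₂))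
    (hM : ∀ x, ∀ t ∈ Ioc t₁ t₂, w x t ≤ M)
    (hB : IsHeatSolOn (fun x t => L * B x t) B (Ioc t₁ t₂))
    (hB_nonneg : ∀ x, ∀ t ∈ Ioc t₁ t₂, 0 ≤ B x t)
    (hinit : ∀ x ∉ S, IsInitiallyNonposAt (fun x t => w x t - B x t) t₁ x)
    (x : ℝ) {t : ℝ} (ht : t ∈ Ioc t₁ t₂) : w x t ≤ B x t := by
  obtain ⟨F, hF, hle⟩ := hw
  refine sub_nonpos.1 ((hF.sub hB).nonpos (L := L) (M := M) hS (fun y s hs => ?_)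
    (fun y s hs hpos => ?_) hinit x ht)
  · exact (sub_le_self _ (hB_nonneg y s hs)).trans (hM y s hs)
  · have hwy : 0 ≤ w y s := (hB_nonneg y s hs).trans (sub_pos.1 hpos).le
    have hFy : F y s ≤ L * w y s :=
      le_of_abs_le (by simpa only [abs_of_nonneg hwy] using hle y s hs)
    linarith

lemma barrier_le (hw : IsLinearlyForcedOn L w (Icc t₁ t₂))
    (hw_nonneg : ∀ x, ∀ t ∈ Icc t₁ t₂, 0 ≤ w x t)
    (hB : IsHeatSolOn (fun x t => -L * B x t) B (Icc t₁ t₂))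
    (hM : ∀ x, ∀ t ∈ Icc t₁ t₂, B x t ≤ M) (hinit : ∀ x, B x t₁ ≤ w x t₁)
    (x : ℝ) {t : ℝ} (ht : t ∈ Ioc t₁ t₂) : B x t ≤ w x t := by
  obtain ⟨F, hF, hle⟩ := hw
  have hd := hB.sub hF
  refine sub_nonpos.1 ((hd.mono Ioc_subset_Icc_self).nonpos_of_source_nonpos (M := M) finite_empty
    (fun y s hs => ?_) (fun y s hs hpos => ?_) (fun y _ => ?_) x ht)
  · have hs := Ioc_subset_Icc_self hs
    exact (sub_le_self _ (hw_nonneg y s hs)).trans (hM y s hs)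
  · have hs := Ioc_subset_Icc_self hs
    have hFy : -(L * w y s) ≤ F y s :=
      neg_le_of_abs_le (by simpa only [abs_of_nonneg (hw_nonneg y s hs)] using hle y s hs)
    nlinarith [L.coe_nonneg]
  · have hcont := hd.1 (y, t₁) ⟨trivial, le_rfl, ht.1.le.trans ht.2⟩
    rw [ContinuousWithinAt, nhdsWithin_prod_eq, nhdsWithin_univ,
      nhdsWithin_Icc_eq_nhdsGE (ht.1.trans_le ht.2)] at hcont
    exact .of_tendsto (hcont.mono_left (prod_mono_right _ (nhdsWithin_mono _ Ioi_subset_Ici_self)))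
      (sub_nonpos.2 (hinit y))

end IsLinearlyForcedOn

/-- A quantitative strong maximum principle; it is essential that `κ` does not depend on `w`. -/
lemma exists_pos_mul_le_of_isLinearlyForcedOn (L : NNReal) (p x : ℝ) {r t₁ t₂ : ℝ} (hr : 0 < r)
    (ht : t₁ < t₂) :
    ∃ κ > 0, ∀ (w : ℝ → ℝ → ℝ) (m : ℝ), IsLinearlyForcedOn L w (Icc t₁ t₂) →
      (∀ y, ∀ t ∈ Icc t₁ t₂, 0 ≤ w y t) → 0 ≤ m → (∀ y, |y - p| ≤ r → m ≤ w y t₁) →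
      κ * m ≤ w x t₂ := by
  obtain ⟨s, hs, hlt⟩ := exists_exp_lt_gaussianBump p x hr ht
  set c := exp (-r ^ 2 / (4 * s))
  refine ⟨exp (-L * (t₂ - t₁)) * (gaussianBump s p t₁ x t₂ - c),
    mul_pos (Real.exp_pos _) (sub_pos.2 hlt), fun w m hw hw_nonneg hm hgap => ?_⟩
  have hsub : Icc t₁ t₂ ⊆ Ioi (t₁ - s) := fun t ht => (sub_lt_self t₁ hs).trans_le ht.1
  have hB := ((((isHeatSolOn_gaussianBump p).mono hsub).sub
    (isHeatSolOn_const c _)).exp_mul (-L) t₁).const_mul m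
  rw [mul_comm]
  refine hw.barrier_le (M := m) hw_nonneg (by convert hB using 3; ring) (fun y t ht => ?_)
    (fun y => ?_) x ⟨ht, le_rfl⟩
  · have hexp : exp (-L * (t - t₁)) ≤ 1 :=
      Real.exp_le_one_iff.2 (mul_nonpos_of_nonpos_of_nonneg (by simp) (sub_nonneg.2 ht.1))
    have hbump : gaussianBump s p t₁ y t - c ≤ 1 :=
      (sub_le_self _ (Real.exp_pos _).le).trans (gaussianBump_le_one p y hs ht.1)
    exact mul_le_of_le_one_right hm
      ((mul_le_of_le_one_right (Real.exp_pos _).le hbump).trans hexp)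
  · rw [sub_self, mul_zero, Real.exp_zero, one_mul]
    rcases le_total |y - p| r with hy | hy
    · refine (mul_le_of_le_one_right hm ?_).trans (hgap y hy)
      exact (sub_le_self _ (Real.exp_pos _).le).trans (gaussianBump_le_one p y hs le_rfl)
    · refine (mul_nonpos_of_nonneg_of_nonpos hm ?_).trans (hw_nonneg y t₁ ⟨le_rfl, ht.le⟩)
      exact sub_nonpos.2 (gaussianBump_initial_le_exp p y hs hr.le hy)

/-! ### Semilinear equations -/

section Semilinear

variable {f u v : ℝ → ℝ → ℝ} {I : Set ℝ}

lemma IsSolOn.continuousOn (hu : IsSolOn f u I) (hI : IsOpen I) :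
    ContinuousOn (fun z : ℝ × ℝ => u z.1 z.2) (univ ×ˢ I) := by
  obtain ⟨ut, ux, -, hut, hux, -, hut_cont, hux_cont, -⟩ := hu
  intro z hz
  have hnear : univ ×ˢ I ∈ 𝓝 z := (isOpen_univ.prod hI).mem_nhds hz
  let toCLM : ℝ →L[ℝ] ℝ →L[ℝ] ℝ := ContinuousLinearMap.toSpanSingletonCLE.toContinuousLinearMap
  have hstrict := hasStrictFDerivAt_uncurry_coprod (𝕜 := ℝ) (u := z) (f := u)
    (f₁ := fun x t => toCLM (ux x t)) (f₂ := fun x t => toCLM (ut x t))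
    (by filter_upwards [hnear] with y hy using (hux y.1 y.2 hy.2).hasFDerivAt)
    (by filter_upwards [hnear] with y hy using (hut y.1 y.2 hy.2).hasFDerivAt)
    (toCLM.continuous.continuousAt.comp (hux_cont.continuousAt hnear))
    (toCLM.continuous.continuousAt.comp (hut_cont.continuousAt hnear))
  exact hstrict.continuousAt.continuousWithinAt

lemma IsSolOn.isHeatSolOn (hu : IsSolOn f u I) (hI : IsOpen I) :
    IsHeatSolOn (fun x t => f t (u x t)) u I := by
  have hcont := hu.continuousOn hI
  obtain ⟨ut, ux, uxx, hut, hux, huxx, -, -, -, heq⟩ := hu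
  exact ⟨hcont, ux, uxx, fun x t ht =>
    ⟨hux x t ht, huxx x t ht, (hut x t ht).congr_deriv (heq x t ht)⟩⟩

lemma IsSolOn.comp_add_const (hu : IsSolOn f u I) (h : ℝ) :
    IsSolOn f (fun x t => u (x + h) t) I := by
  obtain ⟨ut, ux, uxx, hut, hux, huxx, hut_cont, hux_cont, huxx_cont, heq⟩ := hu
  have hshift : ContinuousOn (fun z : ℝ × ℝ => (z.1 + h, z.2)) (univ ×ˢ I) := by fun_prop
  have hmaps : MapsTo (fun z : ℝ × ℝ => (z.1 + h, z.2)) (univ ×ˢ I) (univ ×ˢ I) :=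
    fun z hz => ⟨trivial, hz.2⟩
  exact ⟨fun x t => ut (x + h) t, fun x t => ux (x + h) t, fun x t => uxx (x + h) t,
    fun x t ht => hut (x + h) t ht,
    fun x t ht => (hux (x + h) t ht).comp_add_const x h,
    fun x t ht => (huxx (x + h) t ht).comp_add_const x h,
    hut_cont.comp hshift hmaps, hux_cont.comp hshift hmaps, huxx_cont.comp hshift hmaps,
    fun x t ht => heq (x + h) t ht⟩

lemma isLinearlyForcedOn_sub {C : ℝ} {L : NNReal}
    (hL : ∀ t ∈ I, LipschitzOnWith L (f t) (Icc (-C) C))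
    (hu : IsHeatSolOn (fun x t => f t (u x t)) u I) (hv : IsHeatSolOn (fun x t => f t (v x t)) v I)
    (huC : ∀ x, ∀ t ∈ I, |u x t| ≤ C) (hvC : ∀ x, ∀ t ∈ I, |v x t| ≤ C) :
    IsLinearlyForcedOn L (fun x t => u x t - v x t) I :=
  ⟨_, hu.sub hv, fun x t ht => by
    simpa [Real.dist_eq] using
      (hL t ht).dist_le_mul _ (abs_le.1 (huC x t ht)) _ (abs_le.1 (hvC x t ht))⟩

end Semilinear

/-! ### Negativity of the space derivative -/

lemma exists_forall_mul_le_sub_of_strictAnti {φ φ' : ℝ → ℝ} (hφ : StrictAnti φ)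
    (hd : ∀ y, HasDerivAt φ (φ' y) y) (hφ' : Continuous φ') :
    ∃ p m r, 0 < m ∧ 0 < r ∧ ∀ h ∈ Ioc 0 r, ∀ y, |y - p| ≤ r → m * h ≤ φ y - φ (y + h) := by
  obtain ⟨p, -, hp⟩ := exists_hasDerivAt_eq_slope φ φ' zero_lt_one
    (HasDerivAt.continuousOn fun y _ => hd y) fun y _ => hd y
  have hneg : φ' p < 0 := by
    rw [hp]
    simpa using hφ zero_lt_one
  obtain ⟨r, hr, hslope⟩ := Metric.eventually_nhds_iff.1
    (hφ'.continuousAt.eventually_lt_const (show φ' p < φ' p / 2 by linarith))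
  refine ⟨p, -φ' p / 2, r / 3, by linarith, by linarith, fun h hh y hy => ?_⟩
  obtain ⟨q, hq, hq_slope⟩ := exists_hasDerivAt_eq_slope φ φ' (lt_add_of_pos_right y hh.1)
    (HasDerivAt.continuousOn fun y _ => hd y) fun y _ => hd y
  have hqp : dist q p < r := by
    rw [abs_le] at hy
    rw [Real.dist_eq, abs_lt]
    constructor <;> linarith [hq.1, hq.2, hh.2]
  have hlt := hslope hqp
  rw [hq_slope, add_sub_cancel_left, div_lt_iff₀ hh.1] at hlt
  linarith

lemma hasDerivAt_le_neg_of_forall_mul_le_sub {φ : ℝ → ℝ} {φ' x c r : ℝ} (hd : HasDerivAt φ φ' x)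
    (hr : 0 < r) (hle : ∀ h ∈ Ioc 0 r, c * h ≤ φ x - φ (x + h)) : φ' ≤ -c := by
  refine le_of_tendsto hd.tendsto_slope_zero_right ?_
  filter_upwards [Ioc_mem_nhdsGT hr] with h hh
  rw [smul_eq_mul, ← div_eq_inv_mul, div_le_iff₀ hh.1]
  linarith [hle h hh]

lemma deriv_neg_of_forall_strictAnti {f u : ℝ → ℝ → ℝ} {t₁ t₂ C : ℝ} {L : NNReal} (ht : t₁ < t₂)
    (hL : ∀ t ∈ Icc t₁ t₂, LipschitzOnWith L (f t) (Icc (-C) C))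
    (hu : IsHeatSolOn (fun x t => f t (u x t)) u (Icc t₁ t₂))
    (huC : ∀ x, ∀ t ∈ Icc t₁ t₂, |u x t| ≤ C)
    (hanti : ∀ t ∈ Icc t₁ t₂, StrictAnti fun x => u x t) (x : ℝ) :
    deriv (fun y => u y t₂) x < 0 := by
  have ht₁ := left_mem_Icc.2 ht.le
  have ht₂ := right_mem_Icc.2 ht.le
  obtain ⟨ux, uxx, hderiv⟩ := hu.2
  obtain ⟨p, m, r, hm, hr, hgap⟩ := exists_forall_mul_le_sub_of_strictAnti (hanti t₁ ht₁)
    (fun y => (hderiv y t₁ ht₁).1)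
    (continuous_iff_continuousAt.2 fun y => (hderiv y t₁ ht₁).2.1.continuousAt)
  obtain ⟨κ, hκ, hpropagate⟩ := exists_pos_mul_le_of_isLinearlyForcedOn L p x hr ht
  have hslope : ∀ h ∈ Ioc 0 r, κ * m * h ≤ u x t₂ - u (x + h) t₂ := fun h hh => by
    rw [mul_assoc]
    refine hpropagate (fun y t => u y t - u (y + h) t) (m * h)
      (isLinearlyForcedOn_sub hL hu (hu.comp_add_const h) huC fun y => huC (y + h))
      (fun y t ht => ?_) (mul_pos hm hh.1).le (hgap h hh)
    exact sub_nonneg.2 (hanti t ht (lt_add_of_pos_right y hh.1)).le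
  have hux := (hderiv x t₂ ht₂).1
  calc deriv (fun y => u y t₂) x = ux x t₂ := hux.deriv
    _ ≤ -(κ * m) := hasDerivAt_le_neg_of_forall_mul_le_sub hux hr hslope
    _ < 0 := neg_neg_of_pos (mul_pos hκ hm)

/-! ### The Cauchy problem -/

/-- `f(t,u)` is Lipschitz in `u ∈ [-C, C]` for every `C`, uniformly for `t` in bounded subsets of
`(0,∞)`. -/
def IsLocallyLipschitzInState (f : ℝ → ℝ → ℝ) : Prop :=
  ∀ C T : ℝ, ∃ L : NNReal, ∀ t ∈ Ioc 0 T, LipschitzOnWith L (f t) (Icc (-C) C)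

lemma IsLocallyLipschitzInState.of_locallyLipschitz {f : ℝ → ℝ → ℝ}
    (hf : LocallyLipschitz (Function.uncurry f)) : IsLocallyLipschitzInState f := by
  intro C T
  have hloc : LocallyLipschitzOn (Icc 0 T ×ˢ Icc (-C) C) (Function.uncurry f) :=
    hf.locallyLipschitzOn
  obtain ⟨L, hL⟩ :=
    hloc.exists_lipschitzOnWith_of_compact (isCompact_Icc.prod isCompact_Icc)
  refine ⟨L, fun t ht => LipschitzOnWith.of_dist_le_mul fun x hx y hy => ?_⟩
  have ht := Ioc_subset_Icc_self ht
  simpa [Prod.dist_eq] using hL.dist_le_mul (t, x) ⟨ht, hx⟩ (t, y) ⟨ht, hy⟩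

/-- `u` solves `u_t = u_xx + f(t,u)` on `ℝ × (0,∞)`, is bounded on bounded time intervals, and
attains the initial value `g` locally uniformly off the exceptional set `S`. -/
structure IsCauchySol (f : ℝ → ℝ → ℝ) (S : Set ℝ) (g : ℝ → ℝ) (u : ℝ → ℝ → ℝ) : Prop where
  isHeatSolOn : IsHeatSolOn (fun x t => f t (u x t)) u (Ioi 0)
  exists_abs_le : ∀ T : ℝ, ∃ C, ∀ x, ∀ t ∈ Ioc 0 T, |u x t| ≤ C
  tendsto_initial : ∀ x ∉ S, Tendsto (fun z : ℝ × ℝ => u z.1 z.2) (𝓝 x ×ˢ 𝓝[>] 0) (𝓝 (g x))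

lemma isCauchySol_of_ode {f : ℝ → ℝ → ℝ} {ω : ℝ → ℝ} (hcont : ContinuousOn ω (Ici 0))
    (hω : ∀ t > 0, HasDerivAt ω (f t (ω t)) t) :
    IsCauchySol f ∅ (fun _ => ω 0) fun _ t => ω t where
  isHeatSolOn := ⟨(hcont.mono Ioi_subset_Ici_self).comp continuousOn_snd fun _ hz => hz.2,
    fun _ _ => 0, fun _ _ => 0, fun x t ht => ⟨hasDerivAt_const x (ω t), hasDerivAt_const x 0,
      by simpa using hω t ht⟩⟩
  exists_abs_le T := by
    obtain ⟨C, hC⟩ := isCompact_Icc.exists_bound_of_continuousOn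
      (hcont.mono (Icc_subset_Ici_self : Icc 0 T ⊆ Ici 0))
    exact ⟨C, fun _ t ht => hC t (Ioc_subset_Icc_self ht)⟩
  tendsto_initial _ _ := ((hcont 0 self_mem_Ici).mono Ioi_subset_Ici_self).tendsto.comp tendsto_snd

lemma isCauchySol_zero {f : ℝ → ℝ → ℝ} (hf0 : ∀ t > 0, f t 0 = 0) :
    IsCauchySol f ∅ (fun _ => 0) fun _ _ => 0 :=
  isCauchySol_of_ode (ω := fun _ => 0) continuousOn_const fun t ht =>
    (hasDerivAt_const t 0).congr_deriv (hf0 t ht).symm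

namespace IsCauchySol

variable {f u₁ u₂ : ℝ → ℝ → ℝ} {S₁ S₂ : Set ℝ} {g₁ g₂ : ℝ → ℝ}

lemma exists_isLinearlyForcedOn_sub (hf : IsLocallyLipschitzInState f)
    (h₁ : IsCauchySol f S₁ g₁ u₁) (h₂ : IsCauchySol f S₂ g₂ u₂) (T : ℝ) :
    ∃ L, IsLinearlyForcedOn L (fun x t => u₁ x t - u₂ x t) (Ioc 0 T) := by
  obtain ⟨C₁, hC₁⟩ := h₁.exists_abs_le T
  obtain ⟨C₂, hC₂⟩ := h₂.exists_abs_le T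
  obtain ⟨L, hL⟩ := hf (max C₁ C₂) T
  exact ⟨L, isLinearlyForcedOn_sub hL (h₁.isHeatSolOn.mono Ioc_subset_Ioi_self)
    (h₂.isHeatSolOn.mono Ioc_subset_Ioi_self) (fun x t ht => le_max_of_le_left (hC₁ x t ht))
    fun x t ht => le_max_of_le_right (hC₂ x t ht)⟩

lemma exists_sub_le (h₁ : IsCauchySol f S₁ g₁ u₁) (h₂ : IsCauchySol f S₂ g₂ u₂) (T : ℝ) :
    ∃ M, ∀ x, ∀ t ∈ Ioc 0 T, u₁ x t - u₂ x t ≤ M := by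
  obtain ⟨C₁, hC₁⟩ := h₁.exists_abs_le T
  obtain ⟨C₂, hC₂⟩ := h₂.exists_abs_le T
  exact ⟨C₁ + C₂, fun x t ht => by
    linarith [le_of_abs_le (hC₁ x t ht), neg_le_of_abs_le (hC₂ x t ht)]⟩

lemma tendsto_initial_sub (h₁ : IsCauchySol f S₁ g₁ u₁) (h₂ : IsCauchySol f S₂ g₂ u₂) {x : ℝ}
    (hx : x ∉ S₁ ∪ S₂) :
    Tendsto (fun z : ℝ × ℝ => u₁ z.1 z.2 - u₂ z.1 z.2) (𝓝 x ×ˢ 𝓝[>] 0) (𝓝 (g₁ x - g₂ x)) :=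
  (h₁.tendsto_initial x fun h => hx (.inl h)).sub (h₂.tendsto_initial x fun h => hx (.inr h))

lemma exists_sub_le_mul_exp (hf : IsLocallyLipschitzInState f) (h₁ : IsCauchySol f S₁ g₁ u₁)
    (h₂ : IsCauchySol f S₂ g₂ u₂) (hS₁ : S₁.Finite) (hS₂ : S₂.Finite) (σ : ℝ) {t : ℝ}
    (ht : 0 < t) :
    ∃ C, ∀ K ≥ 0, (∀ x ∉ S₁ ∪ S₂, g₁ x - g₂ x ≤ K * exp (σ * x)) →
      ∀ x, u₁ x t - u₂ x t ≤ K * (C * exp (σ * x)) := by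
  obtain ⟨L, hforced⟩ := h₁.exists_isLinearlyForcedOn_sub hf h₂ t
  obtain ⟨M, hM⟩ := h₁.exists_sub_le h₂ t
  refine ⟨exp (L * t) * exp (σ ^ 2 * t), fun K hK hg x => ?_⟩
  have hB := ((isHeatSolOn_exp σ (Ioc 0 t)).exp_mul L 0).const_mul K
  have hB_initial (y : ℝ) : Tendsto
      (fun z : ℝ × ℝ => K * (exp (L * (z.2 - 0)) * exp (σ * z.1 + σ ^ 2 * z.2)))
      (𝓝 y ×ˢ 𝓝[>] 0) (𝓝 (K * exp (σ * y))) := by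
    refine Tendsto.mono_left ?_ (prod_mono_right _ nhdsWithin_le_nhds)
    rw [← nhds_prod_eq]
    exact Continuous.tendsto' (by fun_prop) _ _ (by simp)
  refine (hforced.le_barrier (hS₁.union hS₂) hM (by convert hB using 3; ring)
    (fun y s _ => by positivity) (fun y hy => ?_) x ⟨ht, le_rfl⟩).trans_eq ?_
  · exact .of_tendsto ((h₁.tendsto_initial_sub h₂ hy).sub (hB_initial y))
      (sub_nonpos.2 (hg y hy))
  · rw [sub_zero, Real.exp_add]
    ring

theorem le (hf : IsLocallyLipschitzInState f) (h₁ : IsCauchySol f S₁ g₁ u₁)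
    (h₂ : IsCauchySol f S₂ g₂ u₂) (hS₁ : S₁.Finite) (hS₂ : S₂.Finite)
    (hg : ∀ x ∉ S₁ ∪ S₂, g₁ x ≤ g₂ x) (x : ℝ) {t : ℝ} (ht : 0 < t) : u₁ x t ≤ u₂ x t := by
  obtain ⟨C, hC⟩ := h₁.exists_sub_le_mul_exp hf h₂ hS₁ hS₂ 0 ht
  simpa using hC 0 le_rfl (by simpa using hg) x

theorem lt (hf : IsLocallyLipschitzInState f) (h₁ : IsCauchySol f S₁ g₁ u₁)
    (h₂ : IsCauchySol f S₂ g₂ u₂) (hS₁ : S₁.Finite) (hS₂ : S₂.Finite)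
    (hg : ∀ x ∉ S₁ ∪ S₂, g₁ x ≤ g₂ x) {y : ℝ} (hy : y ∉ S₁ ∪ S₂) (hgy : g₁ y < g₂ y)
    (x : ℝ) {t : ℝ} (ht : 0 < t) : u₁ x t < u₂ x t := by
  obtain ⟨m, hm, hmy⟩ := exists_between (sub_pos.2 hgy)
  obtain ⟨U, hU, V, hV, hUV⟩ := mem_prod_iff.1
    ((h₂.tendsto_initial_sub h₁ (by rwa [union_comm])).eventually_const_lt hmy)
  obtain ⟨r, hr, hrU⟩ := Metric.nhds_basis_closedBall.mem_iff.1 hU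
  obtain ⟨t₁, ht₁V, ht₁⟩ := ((eventually_mem_set.2 hV).and (Ioo_mem_nhdsGT ht)).exists
  obtain ⟨L, hforced⟩ := h₂.exists_isLinearlyForcedOn_sub hf h₁ t
  obtain ⟨κ, hκ, hpropagate⟩ := exists_pos_mul_le_of_isLinearlyForcedOn L y x hr ht₁.2
  have hgap : κ * m ≤ u₂ x t - u₁ x t :=
    hpropagate (fun x t => u₂ x t - u₁ x t) m
      (hforced.mono fun s hs => ⟨ht₁.1.trans_le hs.1, hs.2⟩)
      (fun z s hs => sub_nonneg.2 (h₁.le hf h₂ hS₁ hS₂ hg z (ht₁.1.trans_le hs.1))) hm.le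
      fun z hz => le_of_lt (hUV (mk_mem_prod (hrU hz) ht₁V))
  exact sub_pos.1 ((mul_pos hκ hm).trans_le hgap)

end IsCauchySol

/-! ### Heaviside initial data -/

/-- The initial datum `α·H(a−x)`, in the form in which it occurs in `IsHeavisideSolBdd`. -/
def heavisideDatum (α a x : ℝ) : ℝ := α * if 0 ≤ a - x then 1 else 0

lemma heavisideDatum_of_le {α a x : ℝ} (hx : x ≤ a) : heavisideDatum α a x = α := by
  simp [heavisideDatum, hx]

lemma heavisideDatum_of_lt {α a x : ℝ} (hx : a < x) : heavisideDatum α a x = 0 := by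
  simp [heavisideDatum, hx]

lemma heavisideDatum_mem_Icc {α : ℝ} (hα : 0 ≤ α) (a x : ℝ) : heavisideDatum α a x ∈ Icc 0 α := by
  rcases le_or_gt x a with hx | hx
  · simpa [heavisideDatum_of_le hx] using hα
  · simpa [heavisideDatum_of_lt hx] using hα

lemma heavisideDatum_le_heavisideDatum {α a₁ a₂ : ℝ} (hα : 0 ≤ α) (ha : a₁ ≤ a₂) (x : ℝ) :
    heavisideDatum α a₁ x ≤ heavisideDatum α a₂ x := by
  rcases le_or_gt x a₁ with hx | hx
  · rw [heavisideDatum_of_le hx, heavisideDatum_of_le (hx.trans ha)]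
  · rw [heavisideDatum_of_lt hx]
    exact (heavisideDatum_mem_Icc hα a₂ x).1

lemma heavisideDatum_le_mul_exp {α : ℝ} (hα : 0 ≤ α) (a x : ℝ) :
    heavisideDatum α a x ≤ α * exp a * exp (-1 * x) := by
  rcases le_or_gt x a with hx | hx
  · rw [heavisideDatum_of_le hx, mul_assoc, ← Real.exp_add]
    exact le_mul_of_one_le_right hα (Real.one_le_exp (by linarith))
  · rw [heavisideDatum_of_lt hx]
    positivity

lemma sub_heavisideDatum_le_mul_exp {α : ℝ} (hα : 0 ≤ α) (a x : ℝ) :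
    α - heavisideDatum α a x ≤ α * exp (-a) * exp (1 * x) := by
  rcases le_or_gt x a with hx | hx
  · rw [heavisideDatum_of_le hx, sub_self]
    positivity
  · rw [heavisideDatum_of_lt hx, sub_zero, mul_assoc, ← Real.exp_add]
    exact le_mul_of_one_le_right hα (Real.one_le_exp (by linarith))

lemma heavisideDatum_eventuallyEq_const {α a x : ℝ} (hx : x ≠ a) :
    heavisideDatum α a =ᶠ[𝓝 x] fun _ => heavisideDatum α a x := by
  rcases hx.lt_or_gt with hxa | hax
  · filter_upwards [Iio_mem_nhds hxa] with y hy
    rw [heavisideDatum_of_le hxa.le, heavisideDatum_of_le (le_of_lt hy)]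
  · filter_upwards [Ioi_mem_nhds hax] with y hy
    rw [heavisideDatum_of_lt hax, heavisideDatum_of_lt hy]

namespace IsHeavisideSolBdd

variable {f u u₁ u₂ : ℝ → ℝ → ℝ} {α a a₁ a₂ : ℝ}

lemma comp_add_const (hu : IsHeavisideSolBdd f α a u) (h : ℝ) :
    IsHeavisideSolBdd f α (a - h) fun x t => u (x + h) t := by
  obtain ⟨hsol, ⟨C, hC⟩, hinit⟩ := hu
  refine ⟨hsol.comp_add_const h, ⟨C, fun x => hC (x + h)⟩, fun K hK haK ε hε => ?_⟩
  obtain ⟨δ, hδ, hclose⟩ := hinit ((fun x => x + h) '' K) (hK.image (by fun_prop))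
    (by rintro ⟨x, hx, rfl⟩; simp [hx] at haK) ε hε
  refine ⟨δ, hδ, fun t ht x hx => ?_⟩
  simpa only [sub_sub, add_comm h x] using hclose t ht (x + h) (mem_image_of_mem _ hx)

lemma isCauchySol (hu : IsHeavisideSolBdd f α a u) :
    IsCauchySol f {a} (heavisideDatum α a) u where
  isHeatSolOn := hu.1.isHeatSolOn isOpen_Ioi
  exists_abs_le _ := hu.2.1.imp fun _ hC x t ht => hC x t ht.1
  tendsto_initial x hx := by
    have hxa : {a}ᶜ ∈ 𝓝 x := isOpen_compl_singleton.mem_nhds hx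
    obtain ⟨K, hK, hKsub, hKcompact⟩ := local_compact_nhds
      (inter_mem hxa (heavisideDatum_eventuallyEq_const (α := α) hx))
    refine Metric.tendsto_nhds.2 fun ε hε => ?_
    obtain ⟨δ, hδ, hclose⟩ := hu.2.2 K hKcompact (fun ha => (hKsub ha).1 rfl) ε hε
    filter_upwards [prod_mem_prod hK (Ioo_mem_nhdsGT hδ)] with z hz
    rw [← show heavisideDatum α a z.1 = heavisideDatum α a x from (hKsub hz.1).2]
    exact hclose z.2 hz.2 z.1 hz.1

lemma lt (hf : IsLocallyLipschitzInState f) (hα : 0 < α) (ha : a₁ < a₂)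
    (h₁ : IsHeavisideSolBdd f α a₁ u₁) (h₂ : IsHeavisideSolBdd f α a₂ u₂) (x : ℝ) {t : ℝ}
    (ht : 0 < t) : u₁ x t < u₂ x t := by
  obtain ⟨y, hy₁, hy₂⟩ := exists_between ha
  refine h₁.isCauchySol.lt hf h₂.isCauchySol (finite_singleton _) (finite_singleton _)
    (fun z _ => heavisideDatum_le_heavisideDatum hα.le ha.le z) (y := y) ?_ ?_ x ht
  · simp [hy₁.ne', hy₂.ne]
  · rwa [heavisideDatum_of_lt hy₁, heavisideDatum_of_le hy₂.le]

lemma strictAnti (hf : IsLocallyLipschitzInState f) (hα : 0 < α) (hu : IsHeavisideSolBdd f α a u)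
    {t : ℝ} (ht : 0 < t) : StrictAnti fun x => u x t := by
  intro x y hxy
  simpa using (hu.comp_add_const (y - x)).lt hf hα (sub_lt_self a (sub_pos.2 hxy)) hu x ht

lemma deriv_neg (hf : IsLocallyLipschitzInState f) (hα : 0 < α) (hu : IsHeavisideSolBdd f α a u)
    (x : ℝ) {t : ℝ} (ht : 0 < t) : deriv (fun y => u y t) x < 0 := by
  obtain ⟨C, hC⟩ := hu.2.1
  obtain ⟨L, hL⟩ := hf C t
  have hpos {s : ℝ} (hs : s ∈ Icc (t / 2) t) : 0 < s := (half_pos ht).trans_le hs.1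
  exact deriv_neg_of_forall_strictAnti (half_lt_self ht) (fun s hs => hL s ⟨hpos hs, hs.2⟩)
    ((hu.1.isHeatSolOn isOpen_Ioi).mono fun s hs => hpos hs) (fun y s hs => hC y s (hpos hs))
    (fun s hs => hu.strictAnti hf hα (hpos hs)) x

lemma nonneg (hf : IsLocallyLipschitzInState f) (hf0 : ∀ t > 0, f t 0 = 0) (hα : 0 ≤ α)
    (hu : IsHeavisideSolBdd f α a u) (x : ℝ) {t : ℝ} (ht : 0 < t) : 0 ≤ u x t :=
  (isCauchySol_zero hf0).le hf hu.isCauchySol finite_empty (finite_singleton a)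
    (fun y _ => (heavisideDatum_mem_Icc hα a y).1) x ht

lemma tendsto_atTop (hf : IsLocallyLipschitzInState f) (hf0 : ∀ t > 0, f t 0 = 0) (hα : 0 ≤ α)
    (hu : IsHeavisideSolBdd f α a u) {t : ℝ} (ht : 0 < t) :
    Tendsto (fun x => u x t) atTop (𝓝 0) := by
  obtain ⟨C, hC⟩ := hu.isCauchySol.exists_sub_le_mul_exp hf (isCauchySol_zero hf0)
    (finite_singleton a) finite_empty (-1) ht
  have hle := hC (α * exp a) (by positivity)
    fun y _ => by simpa using heavisideDatum_le_mul_exp hα a y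
  have hexp : Tendsto (fun x : ℝ => exp (-1 * x)) atTop (𝓝 0) := by
    simpa using Real.tendsto_exp_neg_atTop_nhds_zero
  refine squeeze_zero (fun x => hu.nonneg hf hf0 hα x ht) (fun x => by simpa using hle x) ?_
  simpa using (hexp.const_mul C).const_mul (α * exp a)

variable {ω : ℝ → ℝ}

lemma le_ode (hf : IsLocallyLipschitzInState f) (hα : 0 ≤ α)
    (hω : IsCauchySol f ∅ (fun _ => α) fun _ t => ω t) (hu : IsHeavisideSolBdd f α a u) (x : ℝ)
    {t : ℝ} (ht : 0 < t) : u x t ≤ ω t :=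
  hu.isCauchySol.le hf hω (finite_singleton a) finite_empty
    (fun y _ => (heavisideDatum_mem_Icc hα a y).2) x ht

lemma tendsto_atBot (hf : IsLocallyLipschitzInState f) (hα : 0 ≤ α)
    (hω : IsCauchySol f ∅ (fun _ => α) fun _ t => ω t) (hu : IsHeavisideSolBdd f α a u) {t : ℝ}
    (ht : 0 < t) : Tendsto (fun x => u x t) atBot (𝓝 (ω t)) := by
  obtain ⟨C, hC⟩ := hω.exists_sub_le_mul_exp hf hu.isCauchySol finite_empty (finite_singleton a)
    1 ht
  have hle := hC (α * exp (-a)) (by positivity) fun y _ => sub_heavisideDatum_le_mul_exp hα a y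
  have hexp : Tendsto (fun x : ℝ => exp (1 * x)) atBot (𝓝 0) := by
    simpa using Real.tendsto_exp_atBot
  have hgap : Tendsto (fun x => ω t - u x t) atBot (𝓝 0) := by
    refine squeeze_zero (fun x => sub_nonneg.2 (hu.le_ode hf hα hω x ht)) hle ?_
    simpa using (hexp.const_mul C).const_mul (α * exp (-a))
  simpa using hgap.const_sub (ω t)

end IsHeavisideSolBdd

theorem heaviside_solution_properties_general {f : ℝ → ℝ → ℝ} {α : ℝ} {ω : ℝ → ℝ}
    (hf : IsLocallyLipschitzInState f) (hf0 : ∀ t > 0, f t 0 = 0) (hα : 0 < α)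
    (hω_cont : ContinuousOn ω (Ici 0)) (hω_init : ω 0 = α)
    (hω : ∀ t > 0, HasDerivAt ω (f t (ω t)) t) :
    ∀ a : ℝ, ∀ u : ℝ → ℝ → ℝ, IsHeavisideSolBdd f α a u →
      (∀ x t : ℝ, 0 < t → 0 ≤ u x t ∧ u x t ≤ ω t) ∧
      (∀ x t : ℝ, 0 < t → deriv (fun y => u y t) x < 0) ∧
      (∀ t : ℝ, 0 < t → Tendsto (fun x => u x t) atTop (𝓝 0) ∧
        Tendsto (fun x => u x t) atBot (𝓝 (ω t))) ∧
      (∀ x₀ : ℝ, IsHeavisideSolBdd f α (a - x₀) (fun x t => u (x + x₀) t)) ∧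
      (∀ a₁ a₂ : ℝ, ∀ u₁ u₂ : ℝ → ℝ → ℝ, a₁ < a₂ →
        IsHeavisideSolBdd f α a₁ u₁ → IsHeavisideSolBdd f α a₂ u₂ →
        ∀ x t : ℝ, 0 < t → u₁ x t < u₂ x t) := by
  intro a u hu
  have hω_cauchy : IsCauchySol f ∅ (fun _ => α) fun _ t => ω t :=
    hω_init ▸ isCauchySol_of_ode hω_cont hω
  exact ⟨fun x t ht => ⟨hu.nonneg hf hf0 hα.le x ht, hu.le_ode hf hα.le hω_cauchy x ht⟩,
    fun x t ht => hu.deriv_neg hf hα x ht,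
    fun t ht => ⟨hu.tendsto_atTop hf hf0 hα.le ht, hu.tendsto_atBot hf hα.le hω_cauchy ht⟩,
    hu.comp_add_const,
    fun a₁ a₂ u₁ u₂ ha h₁ h₂ x t ht => h₁.lt hf hα ha h₂ x ht⟩

/-- **Lemma 3.1** (basic properties of the Heaviside-type solution): confinement between `0`
and `ω(α,·)`, strict spatial monotonicity, limits at `x = ±∞`, translation equivariance, and
strict monotonicity in the parameter `a`. -/
theorem heaviside_solution_properties
    (f : ℝ → ℝ → ℝ) (T α : ℝ) (ωsol : ℝ → ℝ → ℝ)
    (hT : 0 < T)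
    (hf : ContDiff ℝ 2 (Function.uncurry f))
    (hfper : ∀ t u : ℝ, f (t + T) u = f t u)
    (hf0 : ∀ t : ℝ, f t 0 = 0)
    (hωinit : ∀ β : ℝ, ωsol β 0 = β)
    (hωode : ∀ β t : ℝ, HasDerivAt (ωsol β) (f t (ωsol β t)) t)
    (hα : 0 < α) (hαfix : ωsol α T = α)
    (hαper : ∀ t : ℝ, ωsol α (t + T) = ωsol α t)
    (hαpos : ∀ t : ℝ, 0 < ωsol α t) :
    ∀ a : ℝ, ∀ u : ℝ → ℝ → ℝ, IsHeavisideSolBdd f α a u →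
      (∀ x t : ℝ, 0 < t → 0 ≤ u x t ∧ u x t ≤ ωsol α t) ∧
      (∀ x t : ℝ, 0 < t → deriv (fun y => u y t) x < 0) ∧
      (∀ t : ℝ, 0 < t → Tendsto (fun x => u x t) atTop (𝓝 0) ∧
        Tendsto (fun x => u x t) atBot (𝓝 (ωsol α t))) ∧
      (∀ x₀ : ℝ, IsHeavisideSolBdd f α (a - x₀) (fun x t => u (x + x₀) t)) ∧
      (∀ a₁ a₂ : ℝ, ∀ u₁ u₂ : ℝ → ℝ → ℝ, a₁ < a₂ →
        IsHeavisideSolBdd f α a₁ u₁ → IsHeavisideSolBdd f α a₂ u₂ →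
        ∀ x t : ℝ, 0 < t → u₁ x t < u₂ x t) := by
  exact heaviside_solution_properties_general
    (.of_locallyLipschitz (hf.of_le (by norm_num)).locallyLipschitz) (fun t _ => hf0 t) hα
    (HasDerivAt.continuousOn fun t _ => hωode α t) (hωinit α) fun t _ => hωode α t

end
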